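/- Amemiya–Halperin theorem: Let H be an inner product space over ℂ. Call a linear subspace U of H ⊥-closed iff U = Uᗮᗮ (where ᗮ denotes the orthogonal complement). The ⊥-closed subspaces of H, ordered by inclusion, with meet U ∩ V, join (U + V)ᗮᗮ and orthocomplement Uᗮ, form an ortholattice C(H); this ortholattice is orthomodular — i.e., for all ⊥-closed U, V with U ⊆ V one has V = (U + (Uᗮ ∩ V))ᗮᗮ — if and only if H is metrically complete (i.e., H is a Hilbert space). -/

import Mathlib

/-!
Orthomodularity trivially holds in a Hilbert space, where every `⊥`-closed subspace is closed and
therefore splits the space. For the converse there are three steps.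

* Orthomodularity forces `H = E + Eᗮ` for every `⊥`-closed `E` (`exists_split`): for `h : H` apply
  it to `E ∩ hᗮ ≤ E`, which has codimension at most one in `E`.
* If all `⊥`-closed subspaces split, then an `ℓ²` series `∑ cₙ eₙ` along the first half of an
  orthonormal family `(eₙ), (fₙ)` converges in `H` (`exists_tendsto`). Out of the `fₙ` one builds
  a vector `h = r₀` and `rₙ → 0` such that the differences `uₙ = rₙ - rₙ₊₁` are orthogonal with
  `‖uₙ‖ = |cₙ|` (`exists_telescope`). With `zₙ = cₙ eₙ`, every `aₙ = uₙ + zₙ` is orthogonal to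
  every `bₘ = uₘ - zₘ`, while `∑ aₙ + ∑ bₙ = 2 h`. Splitting `2 h` along `{aₙ}ᗮᗮ` shows that
  `∑ aₙ = h + ∑ zₙ` converges in `H`.
* A point `x` of the completion of `H` lies in the closed span of an orthonormal sequence of `H`,
  by Gram–Schmidt. Cutting that sequence into two halves, the previous step applies to either
  half, so the Fourier series of `x` converges in `H`; its sum is `x`.
-/

open Submodule

open Filter Topology

section AmemiyaHalperin

variable {H : Type*} [NormedAddCommGroup H] [InnerProductSpace ℂ H]

theorem orthogonal_triple (U : Submodule ℂ H) : Uᗮᗮᗮ = Uᗮ :=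
  le_antisymm (orthogonal_le U.le_orthogonal_orthogonal) (Uᗮ).le_orthogonal_orthogonal

theorem inf_closed {U V : Submodule ℂ H} (hU : Uᗮᗮ = U) (hV : Vᗮᗮ = V) :
    (U ⊓ V)ᗮᗮ = U ⊓ V := by
  refine le_antisymm (le_inf ?_ ?_) (le_orthogonal_orthogonal _)
  · exact (orthogonal_le (orthogonal_le inf_le_left)).trans hU.le
  · exact (orthogonal_le (orthogonal_le inf_le_right)).trans hV.le

/-- In an orthomodular lattice of `⊥`-closed subspaces every `⊥`-closed `E` satisfies
`H = E + Eᗮ`. -/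
theorem exists_split
    (hom : ∀ U V : Submodule ℂ H, Uᗮᗮ = U → Vᗮᗮ = V → U ≤ V → V = (U ⊔ (Uᗮ ⊓ V))ᗮᗮ)
    (E : Submodule ℂ H) (hE : Eᗮᗮ = E) (h : H) : ∃ p ∈ E, ∃ q ∈ Eᗮ, h = p + q := by
  set F : Submodule ℂ H := E ⊓ (ℂ ∙ h)ᗮ with hF
  have hFc : Fᗮᗮ = F := inf_closed hE (orthogonal_triple _)
  have key := hom F E hFc hE inf_le_left
  by_cases hbot : Fᗮ ⊓ E = ⊥
  · rw [hbot, sup_bot_eq, hFc] at key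
    refine ⟨0, E.zero_mem, h, ?_, by simp⟩
    rw [mem_orthogonal]
    intro v hv
    rw [key] at hv
    exact mem_orthogonal_singleton_iff_inner_left.1 hv.2
  · obtain ⟨e, he, he0⟩ := exists_mem_ne_zero_of_ne_bot hbot
    have hee : inner ℂ e e ≠ 0 := inner_self_ne_zero.2 he0
    have hhe : inner ℂ h e ≠ 0 := by
      intro h0
      have : e ∈ F := ⟨he.2, mem_orthogonal_singleton_iff_inner_right.2 h0⟩
      exact hee (he.1 e this)
    set k := inner ℂ e h / inner ℂ e e with hk
    refine ⟨k • e, E.smul_mem _ he.2, h - k • e, ?_, by simp⟩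
    have hqe : inner ℂ e (h - k • e) = 0 := by
      rw [inner_sub_right, inner_smul_right, hk]
      field_simp
      simp
    rw [mem_orthogonal]
    intro v hv
    -- `E = F + ℂ e`, so subtract the right multiple of `e` from `v` to land in `F`
    set l := inner ℂ h v / inner ℂ h e with hl
    have hf : v - l • e ∈ F := by
      refine ⟨E.sub_mem hv (E.smul_mem _ he.2), mem_orthogonal_singleton_iff_inner_right.2 ?_⟩
      rw [inner_sub_right, inner_smul_right, hl]
      field_simp
      simp
    have h1 : inner ℂ (v - l • e) (h - k • e) = 0 := by
      rw [inner_sub_right, inner_smul_right, he.1 _ hf,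
        mem_orthogonal_singleton_iff_inner_left.1 hf.2]
      simp
    have h2 : v = (v - l • e) + l • e := by simp
    rw [h2, inner_add_left, h1, inner_smul_left, hqe]
    simp

/-- Vectors with `⟪rₙ, rₘ⟫ = T (max n m)`, so that the differences `rₙ - rₙ₊₁` are orthogonal with
squared norms `T n - T (n + 1)`. They are `rₙ = T n • wₙ`, where `wₙ` are the partial sums of a
series along `f` with `‖wₙ‖² = 1 / T n`. -/
theorem exists_telescope (f : ℕ → H) (hf : Orthonormal ℂ f) (T : ℕ → ℝ) (hT : ∀ n, 0 < T n)
    (hanti : Antitone T) : ∃ r : ℕ → H, (∀ n, r n ∈ span ℂ (Set.range f)) ∧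
      ∀ n m, inner ℂ (r n) (r m) = (T (max n m) : ℂ) := by
  let ν : ℕ → ℝ := fun k => √(1 / T k - if k = 0 then 0 else 1 / T (k - 1))
  have hν : ∀ k, ν k * ν k = 1 / T k - if k = 0 then 0 else 1 / T (k - 1) := by
    intro k
    apply Real.mul_self_sqrt
    split_ifs with h
    · simpa using (hT k).le
    · exact sub_nonneg.2 (one_div_le_one_div_of_le (hT k) (hanti (Nat.sub_le k 1)))
  have hsum : ∀ n, ∑ k ∈ Finset.range (n + 1), ν k * ν k = 1 / T n := by
    intro n
    induction n with
    | zero => simp [hν]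
    | succ n ih => rw [Finset.sum_range_succ, ih, hν]; simp
  let w : ℕ → H := fun n => ∑ k ∈ Finset.range (n + 1), (ν k : ℂ) • f k
  have hw : ∀ n m, n ≤ m → inner ℂ (w n) (w m) = ((1 / T n : ℝ) : ℂ) := by
    intro n m hnm
    have h1 : ∀ k ∈ Finset.range (n + 1), inner ℂ ((ν k : ℂ) • f k) (w m) = (ν k * ν k : ℂ) := by
      intro k hk
      have hk' : k < m + 1 := by
        have := Finset.mem_range.1 hk
        omega
      rw [inner_smul_left, hf.inner_right_sum _ (Finset.mem_range.2 hk')]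
      simp
    rw [show w n = ∑ k ∈ Finset.range (n + 1), (ν k : ℂ) • f k from rfl, sum_inner,
      Finset.sum_congr rfl h1, ← hsum n]
    push_cast
    rfl
  have hr : ∀ n m, n ≤ m → inner ℂ ((T n : ℂ) • w n) ((T m : ℂ) • w m) = (T m : ℂ) := by
    intro n m hnm
    rw [inner_smul_left, inner_smul_right, hw n m hnm]
    have : (T n : ℂ) ≠ 0 := by exact_mod_cast (hT n).ne'
    push_cast
    rw [Complex.conj_ofReal]
    field_simp
  refine ⟨fun n => (T n : ℂ) • w n, fun n => ?_, fun n m => ?_⟩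
  · exact smul_mem _ _ (sum_mem fun k _ => smul_mem _ _ (subset_span ⟨k, rfl⟩))
  · rcases le_total n m with h | h
    · rw [hr n m h, max_eq_right h]
    · rw [← inner_conj_symm, hr m n h, max_eq_left h, Complex.conj_ofReal]

/-- If `⊥`-closed subspaces split, an `ℓ²` series along one half of an orthonormal family
converges. The unused half supplies the vectors against which the series is compared. -/
theorem exists_tendsto
    (hs : ∀ E : Submodule ℂ H, Eᗮᗮ = E → ∀ h : H, ∃ p ∈ E, ∃ q ∈ Eᗮ, h = p + q)
    (e f : ℕ → H) (he : Orthonormal ℂ e) (hf : Orthonormal ℂ f) (hef : ∀ n m, inner ℂ (e n) (f m) = 0)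
    (c : ℕ → ℂ) (hc : Summable fun n => ‖c n‖ ^ 2) :
    ∃ s, Tendsto (fun N => ∑ n ∈ Finset.range N, c n • e n) atTop (𝓝 s) := by
  let T : ℕ → ℝ := fun n => ∑' k, ‖c (k + n)‖ ^ 2
  have hT1 : ∀ n, T n = ‖c n‖ ^ 2 + T (n + 1) := by
    intro n
    have := ((summable_nat_add_iff n).2 hc).tsum_eq_zero_add
    simp only [zero_add] at this
    simp only [T, this, add_assoc, add_comm 1 n]
  have hT0 : ∀ n, 0 ≤ T n := fun n => tsum_nonneg fun k => sq_nonneg _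
  have hanti : Antitone T := antitone_nat_of_succ_le fun n => by
    rw [hT1 n]; nlinarith [sq_nonneg ‖c n‖]
  by_cases hpos : ∀ n, 0 < T n
  swap
  -- otherwise the coefficients vanish from some point on
  · push Not at hpos
    obtain ⟨N, hN⟩ := hpos
    have hz : ∀ n, N ≤ n → c n = 0 := by
      intro n hn
      have h1 := hanti hn
      have h2 := hT1 n
      have h3 := hT0 (n + 1)
      have : ‖c n‖ ^ 2 = 0 := le_antisymm (by linarith) (sq_nonneg _)
      simpa using this
    refine ⟨∑ n ∈ Finset.range N, c n • e n, tendsto_const_nhds.congr' ?_⟩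
    filter_upwards [eventually_ge_atTop N] with M hM
    refine Finset.sum_subset (Finset.range_mono hM) fun n _ hn => ?_
    rw [hz n (by simpa using hn), zero_smul]
  have hTlim : Tendsto T atTop (𝓝 0) := tendsto_sum_nat_add fun n => ‖c n‖ ^ 2
  obtain ⟨r, hrf, hr⟩ := exists_telescope f hf T hpos hanti
  have hr0 : Tendsto r atTop (𝓝 0) := by
    rw [tendsto_zero_iff_norm_tendsto_zero]
    have : ∀ n, ‖r n‖ = √(T n) := by
      intro n
      have h1 := hr n n
      rw [inner_self_eq_norm_sq_to_K, max_self] at h1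
      rw [← Real.sqrt_sq (norm_nonneg (r n))]
      congr 1
      apply Complex.ofReal_injective
      rw [← h1]
      push_cast
      rfl
    simp only [this]
    simpa using hTlim.sqrt
  have her : ∀ n m, inner ℂ (e n) (r m) = 0 := by
    intro n m
    have : span ℂ (Set.range f) ≤ (ℂ ∙ e n)ᗮ := by
      rw [span_le]
      rintro _ ⟨k, rfl⟩
      exact mem_orthogonal_singleton_iff_inner_right.2 (hef n k)
    exact mem_orthogonal_singleton_iff_inner_right.1 (this (hrf m))
  have hre : ∀ n m, inner ℂ (r m) (e n) = 0 := fun n m => by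
    rw [← inner_conj_symm, her, map_zero]
  let a : ℕ → H := fun n => (r n - r (n + 1)) + c n • e n
  let b : ℕ → H := fun n => (r n - r (n + 1)) - c n • e n
  have hab : ∀ n m, inner ℂ (a n) (b m) = 0 := by
    intro n m
    simp only [a, b, inner_add_left, inner_sub_right, inner_sub_left, inner_smul_left,
      inner_smul_right, her, hre, hr, orthonormal_iff_ite.1 he]
    rcases lt_trichotomy n m with h | h | h
    · rw [max_eq_right h.le, max_eq_right (by omega : n ≤ m + 1), max_eq_right (by omega : n + 1 ≤ m),
        max_eq_right (by omega : n + 1 ≤ m + 1), if_neg h.ne]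
      ring
    · subst h
      have h1 : (T n : ℂ) = (‖c n‖ : ℂ) ^ 2 + T (n + 1) := by exact_mod_cast hT1 n
      have h2 := RCLike.conj_mul (c n)
      simp only [max_self, max_eq_right (Nat.le_succ n), max_eq_left (Nat.le_succ n), if_true, h1]
      simp only [RCLike.ofReal_eq_complex_ofReal] at h2
      linear_combination (-1 : ℂ) * h2
    · rw [max_eq_left h.le, max_eq_left (by omega : m + 1 ≤ n), max_eq_left (by omega : m ≤ n + 1),
        max_eq_left (by omega : m + 1 ≤ n + 1), if_neg h.ne']
      ring
  set E : Submodule ℂ H := (span ℂ (Set.range a))ᗮᗮ with hE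
  have haE : ∀ n, a n ∈ E := fun n => le_orthogonal_orthogonal _ (subset_span ⟨n, rfl⟩)
  have hbE : ∀ n, b n ∈ Eᗮ := by
    intro n
    rw [hE, orthogonal_triple]
    have : span ℂ (Set.range a) ≤ (ℂ ∙ b n)ᗮ := by
      rw [span_le]
      rintro _ ⟨k, rfl⟩
      exact mem_orthogonal_singleton_iff_inner_left.2 (hab k n)
    rw [mem_orthogonal]
    exact fun u hu => mem_orthogonal_singleton_iff_inner_left.1 (this hu)
  obtain ⟨p, hp, q, hq, hpq⟩ := hs E (orthogonal_triple _) ((2 : ℂ) • r 0)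
  let A : ℕ → H := fun N => ∑ n ∈ Finset.range N, a n
  let B : ℕ → H := fun N => ∑ n ∈ Finset.range N, b n
  let Z : ℕ → H := fun N => ∑ n ∈ Finset.range N, c n • e n
  have hA : ∀ N, A N = r 0 - r N + Z N := fun N => by
    simp only [A, a, Z, Finset.sum_add_distrib, Finset.sum_range_sub']
  have hB : ∀ N, B N = r 0 - r N - Z N := fun N => by
    simp only [B, b, Z]
    rw [Finset.sum_sub_distrib, Finset.sum_range_sub' r N]
  -- `p - A N` and `q - B N` are orthogonal with sum `2 r N`, by Pythagoras both tend to `0`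
  have hbound : ∀ N, ‖p - A N‖ ≤ 2 * ‖r N‖ := by
    intro N
    have h1 : inner ℂ (p - A N) (q - B N) = 0 :=
      (Eᗮ.sub_mem hq (sum_mem fun n _ => hbE n)) _ (E.sub_mem hp (sum_mem fun n _ => haE n))
    have h2 := norm_add_sq_eq_norm_sq_add_norm_sq_of_inner_eq_zero _ _ h1
    have h3 : (p - A N) + (q - B N) = (2 : ℂ) • r N := by
      have : (p - A N) + (q - B N) = (p + q) - (A N + B N) := by abel
      rw [this, ← hpq, hA, hB]
      module
    rw [h3, norm_smul, Complex.norm_ofNat] at h2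
    nlinarith [norm_nonneg (p - A N), norm_nonneg (r N), mul_self_nonneg ‖q - B N‖]
  have hAlim : Tendsto (fun N => p - A N) atTop (𝓝 0) :=
    squeeze_zero_norm hbound (by simpa using hr0.norm.const_mul 2)
  refine ⟨p - 0 - r 0 + 0, ?_⟩
  refine (((tendsto_const_nhds.sub hAlim).sub_const (r 0)).add hr0).congr fun N => ?_
  change p - (p - A N) - r 0 + r N = Z N
  rw [hA]
  abel

/-- Riesz–Fischer for the half `e` of an orthonormal family: every `ℓ²` sequence consists of the
Fourier coefficients of a vector in the closed span of `e`, which is orthogonal to `f`. -/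
theorem exists_fourier
    (hs : ∀ E : Submodule ℂ H, Eᗮᗮ = E → ∀ h : H, ∃ p ∈ E, ∃ q ∈ Eᗮ, h = p + q)
    (e f : ℕ → H) (he : Orthonormal ℂ e) (hf : Orthonormal ℂ f) (hef : ∀ n m, inner ℂ (e n) (f m) = 0)
    (c : ℕ → ℂ) (hc : Summable fun n => ‖c n‖ ^ 2) :
    ∃ s ∈ closure (span ℂ (Set.range e) : Set H),
      (∀ n, inner ℂ (e n) s = c n) ∧ ∀ n, inner ℂ (f n) s = 0 := by
  obtain ⟨s, hlim⟩ := exists_tendsto hs e f he hf hef c hc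
  refine ⟨s, mem_closure_of_tendsto hlim (Eventually.of_forall fun N =>
    sum_mem fun k _ => smul_mem _ _ (subset_span ⟨k, rfl⟩)), fun n => ?_, fun n => ?_⟩
  · refine tendsto_nhds_unique (tendsto_const_nhds.inner hlim) (tendsto_const_nhds.congr' ?_)
    filter_upwards [eventually_gt_atTop n] with N hN
    rw [he.inner_right_sum _ (Finset.mem_range.2 hN)]
  · refine tendsto_nhds_unique (tendsto_const_nhds.inner hlim) (tendsto_const_nhds.congr fun N => ?_)
    rw [inner_sum]
    refine (Finset.sum_eq_zero fun k _ => ?_).symm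
    rw [inner_smul_right, ← inner_conj_symm, hef, map_zero, mul_zero]

open UniformSpace in
/-- A point of the completion outside `H` is in the closed span of an orthonormal sequence of
`H`, here indexed by `ℕ ⊕ ℕ` to have it cut into two halves. -/
theorem exists_orthonormal (x : Completion H) (hx : x ∉ Set.range ((↑) : H → Completion H)) :
    ∃ e : ℕ ⊕ ℕ → H, Orthonormal ℂ e ∧
      x ∈ closure (((↑) : H → Completion H) '' (span ℂ (Set.range e) : Set H)) := by
  obtain ⟨y, hy, hylim⟩ := mem_closure_iff_seq_limit.1 (Completion.denseRange_coe x)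
  choose g hg using hy
  obtain ⟨b, hbg, hspan, hli⟩ := exists_linearIndependent ℂ (Set.range g)
  have hcl : x ∈ closure (((↑) : H → Completion H) '' (span ℂ b : Set H)) := by
    refine mem_closure_of_tendsto hylim (Eventually.of_forall fun n => ?_)
    rw [hspan, ← hg n]
    exact ⟨g n, subset_span ⟨n, rfl⟩, rfl⟩
  have hcount : b.Countable := (Set.countable_range g).mono hbg
  have hinf : b.Infinite := by
    intro hfin
    -- a finite-dimensional span is complete, so it has no limit points outside `H`
    have : FiniteDimensional ℂ (span ℂ b) := FiniteDimensional.span_of_finite ℂ hfin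
    have hcomp : IsComplete (span ℂ b : Set H) := (span ℂ b).complete_of_finiteDimensional
    have : IsComplete (((↑) : H → Completion H) '' (span ℂ b : Set H)) :=
      (Completion.isUniformInducing_coe H).isComplete_iff.2 hcomp
    rw [this.isClosed.closure_eq] at hcl
    obtain ⟨v, -, hv⟩ := hcl
    exact hx ⟨v, hv⟩
  have := hcount.to_subtype
  have := hinf.to_subtype
  obtain ⟨φ⟩ : Nonempty (ℕ ≃ b) := ⟨(nonempty_denumerable b).some.eqv.symm⟩
  let v : ℕ → H := fun n => φ n
  have hv : LinearIndependent ℂ v := hli.comp φ φ.injective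
  have hvr : Set.range v = b := by
    have : v = Subtype.val ∘ φ := rfl
    rw [this, φ.surjective.range_comp, Subtype.range_coe]
  refine ⟨InnerProductSpace.gramSchmidtNormed ℂ v ∘ Equiv.natSumNatEquivNat,
    (InnerProductSpace.gramSchmidtNormed_orthonormal hv).comp _ Equiv.natSumNatEquivNat.injective, ?_⟩
  rw [Equiv.natSumNatEquivNat.surjective.range_comp,
    InnerProductSpace.span_gramSchmidtNormed_range, InnerProductSpace.span_gramSchmidt, hvr]
  exact hcl

open UniformSpace in
theorem complete_of_split
    (hs : ∀ E : Submodule ℂ H, Eᗮᗮ = E → ∀ h : H, ∃ p ∈ E, ∃ q ∈ Eᗮ, h = p + q) :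
    CompleteSpace H := by
  suffices hsurj : ∀ x : Completion H, x ∈ Set.range ((↑) : H → Completion H) by
    have : IsComplete (Set.range ((↑) : H → Completion H)) := by
      rw [Set.eq_univ_of_forall hsurj]
      exact completeSpace_iff_isComplete_univ.1 inferInstance
    exact (completeSpace_iff_isComplete_range (Completion.isUniformInducing_coe H)).2 this
  intro x
  by_contra hx
  obtain ⟨e, he, hxe⟩ := exists_orthonormal x hx
  let ι : H →ₗᵢ[ℂ] Completion H := Completion.toComplₗᵢ
  let e' : ℕ ⊕ ℕ → Completion H := fun i => (e i : Completion H)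
  have he' : Orthonormal ℂ e' := he.comp_linearIsometry ι
  let c : ℕ ⊕ ℕ → ℂ := fun i => inner ℂ (e' i) x
  have hc : Summable fun i => ‖c i‖ ^ 2 := he'.inner_products_summable x
  have hperp : ∀ i j, i ≠ j → inner ℂ (e i) (e j) = 0 := fun i j hij => he.2 hij
  obtain ⟨s, hsc, hs1, hs2⟩ := exists_fourier hs (e ∘ Sum.inl) (e ∘ Sum.inr)
    (he.comp _ Sum.inl_injective) (he.comp _ Sum.inr_injective) (fun n m => hperp _ _ (by simp))
    (c ∘ Sum.inl) (hc.comp_injective Sum.inl_injective)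
  obtain ⟨t, htc, ht1, ht2⟩ := exists_fourier hs (e ∘ Sum.inr) (e ∘ Sum.inl)
    (he.comp _ Sum.inr_injective) (he.comp _ Sum.inl_injective) (fun n m => hperp _ _ (by simp))
    (c ∘ Sum.inr) (hc.comp_injective Sum.inr_injective)
  -- `x - (s + t)` lies in the closed span `K` of `e` and is orthogonal to `e`
  let K : Submodule ℂ (Completion H) := (span ℂ (Set.range e')).topologicalClosure
  have hspan : ι '' (span ℂ (Set.range e) : Set H) = (span ℂ (Set.range e') : Set _) := by
    have h1 : Set.range e' = ι.toLinearMap '' Set.range e := by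
      rw [← Set.range_comp]
      rfl
    rw [h1, span_image]
    rfl
  have hmem : ∀ u ∈ closure (span ℂ (Set.range e) : Set H), (u : Completion H) ∈ K := by
    intro u hu
    have := image_closure_subset_closure_image ι.continuous ⟨u, hu, rfl⟩
    rwa [hspan] at this
  have hxK : x ∈ K := by
    have : x ∈ closure (ι '' (span ℂ (Set.range e) : Set H)) := hxe
    rwa [hspan] at this
  have hsK := hmem s (closure_mono (span_mono (Set.range_comp_subset_range _ _)) hsc)
  have htK := hmem t (closure_mono (span_mono (Set.range_comp_subset_range _ _)) htc)
  set d : Completion H := x - (s + t) with hd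
  have hdK : d ∈ K := K.sub_mem hxK (K.add_mem hsK htK)
  have horth : ∀ i, inner ℂ (e' i) d = 0 := by
    rintro (n | n)
    · have h1 := hs1 n
      have h2 := ht2 n
      simp only [Function.comp_apply] at h1 h2
      simp only [hd, e', inner_sub_right, inner_add_right, Completion.inner_coe, h1, h2]
      simp [c, e']
    · have h1 := hs2 n
      have h2 := ht1 n
      simp only [Function.comp_apply] at h1 h2
      simp only [hd, e', inner_sub_right, inner_add_right, Completion.inner_coe, h1, h2]
      simp [c, e']
  have hdd : d ∈ Kᗮ := by
    simp only [K, orthogonal_closure]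
    have : span ℂ (Set.range e') ≤ (ℂ ∙ d)ᗮ := by
      rw [span_le]
      rintro _ ⟨i, rfl⟩
      exact mem_orthogonal_singleton_iff_inner_left.2 (horth i)
    rw [mem_orthogonal]
    exact fun u hu => mem_orthogonal_singleton_iff_inner_left.1 (this hu)
  have hd0 : d = 0 := inner_self_eq_zero.1 (hdd d hdK)
  refine hx ⟨s + t, ?_⟩
  rw [Completion.coe_add]
  exact (sub_eq_zero.1 hd0).symm

end AmemiyaHalperin

/-- Amemiya–Halperin theorem: for an inner product space `H` over `ℂ`, the
`⊥`-closed subspaces of `H` (with meet `U ⊓ V`, join `(U ⊔ V)ᗮᗮ` and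
orthocomplement `Uᗮ`) form an ortholattice, and this ortholattice is
orthomodular if and only if `H` is metrically complete (a Hilbert space). -/
theorem stmt_7 {H : Type*} [NormedAddCommGroup H] [InnerProductSpace ℂ H] :
    -- the ⊥-closed subspaces are closed under the ortholattice operations
    (∀ U V : Submodule ℂ H, Uᗮᗮ = U → Vᗮᗮ = V →
      (U ⊓ V)ᗮᗮ = U ⊓ V ∧ ((U ⊔ V)ᗮᗮ)ᗮᗮ = (U ⊔ V)ᗮᗮ ∧ (Uᗮ)ᗮᗮ = Uᗮ) ∧
    ((⊥ : Submodule ℂ H)ᗮᗮ = ⊥ ∧ (⊤ : Submodule ℂ H)ᗮᗮ = ⊤) ∧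
    -- the orthocomplement laws hold on ⊥-closed subspaces
    (∀ U V : Submodule ℂ H, Uᗮᗮ = U → Vᗮᗮ = V →
      (Uᗮ)ᗮ = U ∧ (U ≤ V → Vᗮ ≤ Uᗮ) ∧ U ⊓ Uᗮ = ⊥) ∧
    -- orthomodularity holds exactly when `H` is complete
    ((∀ U V : Submodule ℂ H, Uᗮᗮ = U → Vᗮᗮ = V → U ≤ V →
      V = (U ⊔ (Uᗮ ⊓ V))ᗮᗮ) ↔ CompleteSpace H) := by
  refine ⟨fun U V hU hV => ⟨inf_closed hU hV, orthogonal_triple _, orthogonal_triple U⟩,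
    ⟨by simp, by simp⟩,
    fun U V hU _ => ⟨hU, fun h => orthogonal_le h, U.inf_orthogonal_eq_bot⟩,
    fun hom => complete_of_split (exists_split hom), fun hH U V hU hV hUV => ?_⟩
  have : CompleteSpace U := by
    rw [← hU]
    infer_instance
  rw [sup_orthogonal_inf_of_hasOrthogonalProjection hUV, hV]
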